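/- arXiv:2110.08694 — 5 statements merged into one kernel-verified Lean document; each statement's English description precedes it below -/
import Mathlib

section
/- There exist finitely many binomials h_1, …, h_m ∈ 𝔅 such that for every a, b ∈ ℤ_{≥0}^L with Σ_i a_i s_i = Σ_i b_i s_i there exist polynomials g_1, …, g_m ∈ R[y_1,…,y_L] with y^a − y^b = Σ_{i=1}^m g_i h_i and deg(g_i) ≤ max{|a|, |b|} for all i. -/
/-!
Pairs `(a, b)` of exponents with `∑ aⱼ sⱼ = ∑ bⱼ sⱼ` form a submonoid of `ℕ^L × ℕ^L`, closed under
differences `x - u` with `u ≤ x`. By Dickson's lemma its nonzero elements have finitely many minimal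
ones (the Graver basis together with the trivial pairs); the corresponding binomials are the `hᵢ`.

Given a nonzero pair `(a, b)`, pick a minimal `(u, v) ≤ (a, b)` and write `(a, b) = (u, v) + (c, d)`.
Then
`y^a - y^b = y^c (y^u - y^v) + y^v (y^c - y^d) = y^d (y^u - y^v) + y^u (y^c - y^d)`,
and induction applies to `(c, d)`. Multiplying the coefficients obtained for `y^c - y^d` by
whichever of `y^u`, `y^v` has smaller degree keeps the degrees within `max |a| |b|`:
`min |u| |v| + max |c| |d| ≤ max (|u| + |c|) (|v| + |d|)`.
-/

open MvPolynomial in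
/-- The degree-controlled decomposition, with coefficients indexed by a finite set `T` of pairs such
that every nonzero pair of equal weight splits off an element of `T`. -/
theorem exists_bounded_coeffs {R σ M : Type*} [CommRing R] [AddCancelCommMonoid M]
    (w : (σ →₀ ℕ) →+ M) (T : Finset ((σ →₀ ℕ) × (σ →₀ ℕ)))
    (hT : ∀ x ∈ T, x ≠ 0 ∧ w x.1 = w x.2)
    (hmin : ∀ x : (σ →₀ ℕ) × (σ →₀ ℕ), x ≠ 0 → w x.1 = w x.2 → ∃ t ∈ T, t ≤ x)
    (N : ℕ) (a b : σ →₀ ℕ) (hN : a.degree + b.degree ≤ N) (hab : w a = w b) :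
    ∃ g : (σ →₀ ℕ) × (σ →₀ ℕ) → MvPolynomial σ R,
      monomial a (1 : R) - monomial b 1 =
        ∑ t ∈ T, g t * (monomial t.1 (1 : R) - monomial t.2 1) ∧
      ∀ t, (g t).totalDegree ≤ max a.degree b.degree := by
  classical
  induction N generalizing a b with
  | zero =>
    have ha : a = 0 := (Finsupp.degree_eq_zero_iff a).1 (by omega)
    have hb : b = 0 := (Finsupp.degree_eq_zero_iff b).1 (by omega)
    subst ha hb
    exact ⟨0, by simp, by simp⟩
  | succ N ih =>
    by_cases h0 : (a, b) = 0
    · obtain ⟨rfl, rfl⟩ := Prod.mk_eq_zero.1 h0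
      exact ⟨0, by simp, by simp⟩
    obtain ⟨⟨u, v⟩, htT, hle⟩ := hmin (a, b) h0 hab
    obtain ⟨ht0, huv⟩ := hT _ htT
    obtain ⟨c, rfl⟩ := exists_add_of_le hle.1
    obtain ⟨d, rfl⟩ := exists_add_of_le hle.2
    simp only at huv hab hN ⊢
    have hcd : w c = w d := by
      rw [map_add, map_add, huv] at hab
      exact add_left_cancel hab
    have hpos : 0 < u.degree + v.degree := by
      by_contra h
      exact ht0 (Prod.mk_eq_zero.2 ⟨(Finsupp.degree_eq_zero_iff u).1 (by omega),
        (Finsupp.degree_eq_zero_iff v).1 (by omega)⟩)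
    simp only [map_add] at hN ⊢
    obtain ⟨g, hg, hdeg⟩ := ih c d (by omega) hcd
    have hmono : ∀ p : σ →₀ ℕ, (monomial p (1 : R)).totalDegree ≤ p.degree := fun p =>
      totalDegree_monomial_le p 1
    -- `p` is the exponent multiplying `y^c - y^d`, and `q` the one multiplying `y^u - y^v`.
    have key : ∀ p q : σ →₀ ℕ,
        monomial (u + c) (1 : R) - monomial (v + d) 1 =
          monomial p 1 * (monomial c (1 : R) - monomial d 1) +
            monomial q 1 * (monomial u (1 : R) - monomial v 1) →
        p.degree + max c.degree d.degree ≤ max (u.degree + c.degree) (v.degree + d.degree) →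
        q.degree ≤ max (u.degree + c.degree) (v.degree + d.degree) →
        ∃ g : (σ →₀ ℕ) × (σ →₀ ℕ) → MvPolynomial σ R,
          monomial (u + c) (1 : R) - monomial (v + d) 1 =
            ∑ t ∈ T, g t * (monomial t.1 (1 : R) - monomial t.2 1) ∧
          ∀ t, (g t).totalDegree ≤ max (u.degree + c.degree) (v.degree + d.degree) := by
      intro p q hpq hp hq
      refine ⟨fun t => monomial p 1 * g t + if t = (u, v) then monomial q 1 else 0, ?_, ?_⟩
      · simp only [add_mul, Finset.sum_add_distrib, ite_mul, zero_mul, Finset.sum_ite_eq', htT,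
          if_true, mul_assoc, ← Finset.mul_sum]
        rw [← hg, hpq]
      · intro t
        refine (totalDegree_add _ _).trans (max_le ?_ ?_)
        · exact (totalDegree_mul _ _).trans ((add_le_add (hmono p) (hdeg t)).trans hp)
        · split_ifs
          · exact (hmono q).trans hq
          · simp
    have hm : ∀ p q : σ →₀ ℕ, monomial (p + q) (1 : R) = monomial p 1 * monomial q 1 := by
      intro p q
      simp [monomial_mul]
    rcases le_total u.degree v.degree with h | h
    · exact key u d (by rw [hm, hm]; ring) (by omega) (by omega)
    · exact key v c (by rw [hm, hm]; ring) (by omega) (by omega)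

/-- There exist finitely many binomials `h₁, …, h_m` in the toric ideal
(i.e. of the form `y^a - y^b` with `∑ aᵢ sᵢ = ∑ bᵢ sᵢ`) such that every binomial
`y^a - y^b` with `∑ aᵢ sᵢ = ∑ bᵢ sᵢ` can be written as `∑ gᵢ hᵢ` with
`deg gᵢ ≤ max (|a|) (|b|)`. -/
theorem binomial_ideal_degree_bounded_generators
    {R : Type*} [CommRing R] (L n : ℕ) (hL : 1 ≤ L) (hn : 1 ≤ n)
    (s : Fin L → Fin n → ℤ) :
    ∃ (m : ℕ) (a b : Fin m → (Fin L →₀ ℕ)),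
      (∀ i, ∑ j, (a i j : ℤ) • s j = ∑ j, (b i j : ℤ) • s j) ∧
      ∀ a' b' : Fin L →₀ ℕ,
        (∑ j, (a' j : ℤ) • s j = ∑ j, (b' j : ℤ) • s j) →
        ∃ g : Fin m → MvPolynomial (Fin L) R,
          (MvPolynomial.monomial a' (1 : R) - MvPolynomial.monomial b' (1 : R) =
            ∑ i, g i *
              (MvPolynomial.monomial (a i) (1 : R) - MvPolynomial.monomial (b i) (1 : R))) ∧
          ∀ i, (g i).totalDegree ≤ max (∑ j, a' j) (∑ j, b' j) := by
  let w : (Fin L →₀ ℕ) →+ (Fin n → ℤ) :=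
    { toFun := fun a => ∑ j, (a j : ℤ) • s j
      map_zero' := by simp
      map_add' := fun a b => by simp [add_smul, Finset.sum_add_distrib] }
  let P : (Fin L →₀ ℕ) × (Fin L →₀ ℕ) → Prop := fun x => x ≠ 0 ∧ w x.1 = w x.2
  -- Dickson's lemma: antichains in `ℕ^L × ℕ^L` are finite.
  have hfin : {x | Minimal P x}.Finite :=
    WellQuasiOrderedLE.finite_of_isAntichain (setOfPred_minimal_antichain P)
  let T := hfin.toFinset
  have hT : ∀ x ∈ T, x ≠ 0 ∧ w x.1 = w x.2 := fun x hx => (hfin.mem_toFinset.1 hx).prop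
  have hmin : ∀ x : (Fin L →₀ ℕ) × (Fin L →₀ ℕ), x ≠ 0 → w x.1 = w x.2 → ∃ t ∈ T, t ≤ x := by
    intro x h0 hx
    obtain ⟨t, htx, ht⟩ := exists_minimal_le_of_wellFoundedLT P x ⟨h0, hx⟩
    exact ⟨t, hfin.mem_toFinset.2 ht, htx⟩
  refine ⟨T.card, fun i => (T.equivFin.symm i).1.1, fun i => (T.equivFin.symm i).1.2,
    fun i => (hT _ (T.equivFin.symm i).2).2, fun a' b' h => ?_⟩
  obtain ⟨g, hg, hdeg⟩ := exists_bounded_coeffs (R := R) w T hT hmin _ a' b' le_rfl h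
  refine ⟨fun i => g (T.equivFin.symm i).1, ?_, fun i => ?_⟩
  · rw [hg, ← Finset.sum_coe_sort]
    exact (Equiv.sum_comp T.equivFin.symm (fun t : T => g t.1 *
      (MvPolynomial.monomial t.1.1 (1 : R) - MvPolynomial.monomial t.1.2 (1 : R)))).symm
  · simpa [Finsupp.degree_eq_sum] using hdeg (T.equivFin.symm i).1
end

section
/- For every nonzero u ∈ δ ∩ ℤ^n there exist finitely many elements t_1, …, t_r of the set S = {Σ_{j=1}^N r_j w_j : 0 ≤ r_j ≤ 1 for all j} ∩ ℤ^n and positive integers v_1, …, v_r such that u = Σ_{i=1}^r v_i t_i and w(u) = Σ_{i=1}^r v_i w(t_i). -/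
/-!
The weight of a cone point `x` is the minimum of `∑ j, a j` over all representations
`x = ∑ j, a j • w j` with `a j ≥ 0` (`weight_le_sum`, `exists_minimal_representation`); the minimum
is attained because the representations with `∑ j, a j` bounded form a compact set.  In particular
the weight is subadditive and positively homogeneous on the cone (`weight_sum_le`).

Take a minimal representation `u = ∑ j, c j • w j`.  Then `u = t + ∑ j, ⌊c j⌋ • w j`, where
`t = ∑ j, fract (c j) • w j` is a lattice point of `S`.  Since `weight t ≤ ∑ j, fract (c j)` and
`weight (w j) ≤ 1`,
`weight t + ∑ j, ⌊c j⌋ * weight (w j) ≤ ∑ j, c j = weight u`,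
and subadditivity gives the opposite inequality.  Terms with `⌊c j⌋ = 0` are discarded.
-/

open Pointwise

/-- The real vector associated to an integer lattice vector. -/
def intToReal (n : ℕ) (u : Fin n → ℤ) : Fin n → ℝ := fun i => (u i : ℝ)

/-- The convex cone `δ` generated by `w₁, …, w_N`. -/
def deltaCone (n N : ℕ) (w : Fin N → Fin n → ℤ) : Set (Fin n → ℝ) :=
  {x | ∃ c : Fin N → ℝ, (∀ j, 0 ≤ c j) ∧ x = ∑ j, c j • intToReal n (w j)}

/-- The Newton polyhedron `Δ`: the convex hull of `{w₁, …, w_N} ∪ {0}`. -/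
def newtonPolyhedron (n N : ℕ) (w : Fin N → Fin n → ℤ) : Set (Fin n → ℝ) :=
  convexHull ℝ (insert 0 (Set.range fun j => intToReal n (w j)))

/-- The weight function `w(u) = inf {c : 0 ≤ c ∧ u ∈ c • Δ}`. -/
noncomputable def weight (n N : ℕ) (w : Fin N → Fin n → ℤ) (u : Fin n → ℝ) : ℝ :=
  sInf {c : ℝ | 0 ≤ c ∧ u ∈ c • newtonPolyhedron n N w}

/-- The set `S` of lattice points of the form `∑ rⱼ wⱼ` with `0 ≤ rⱼ ≤ 1`. -/
def latticeS (n N : ℕ) (w : Fin N → Fin n → ℤ) : Set (Fin n → ℤ) :=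
  {s | ∃ r : Fin N → ℝ, (∀ j, 0 ≤ r j ∧ r j ≤ 1) ∧
    intToReal n s = ∑ j, r j • intToReal n (w j)}

lemma sum_mem_smul_newtonPolyhedron {n N : ℕ} (w : Fin N → Fin n → ℤ) (a : Fin N → ℝ)
    (ha : ∀ j, 0 ≤ a j) :
    ∑ j, a j • intToReal n (w j) ∈ (∑ j, a j) • newtonPolyhedron n N w := by
  rcases (Finset.sum_nonneg fun j _ => ha j).eq_or_lt with h | h
  · have h0 : ∀ j, a j = 0 := fun j =>
      (Finset.sum_eq_zero_iff_of_nonneg fun j _ => ha j).1 h.symm j (Finset.mem_univ j)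
    refine ⟨0, subset_convexHull ℝ _ (Set.mem_insert _ _), ?_⟩
    simp [h0]
  · refine ⟨Finset.univ.centerMass a fun j => intToReal n (w j), ?_, ?_⟩
    · exact Finset.centerMass_mem_convexHull _ (fun j _ => ha j) h
        fun j _ => Set.mem_insert_of_mem _ ⟨j, rfl⟩
    · simp [Finset.centerMass, smul_smul, h.ne']

lemma weight_le_sum {n N : ℕ} (w : Fin N → Fin n → ℤ) (a : Fin N → ℝ) (ha : ∀ j, 0 ≤ a j) :
    weight n N w (∑ j, a j • intToReal n (w j)) ≤ ∑ j, a j :=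
  csInf_le ⟨0, fun _ h => h.1⟩
    ⟨Finset.sum_nonneg fun j _ => ha j, sum_mem_smul_newtonPolyhedron w a ha⟩

lemma exists_representation_of_mem_smul {n N : ℕ} (w : Fin N → Fin n → ℤ) {c : ℝ} (hc : 0 ≤ c)
    {x : Fin n → ℝ} (hx : x ∈ c • newtonPolyhedron n N w) :
    ∃ a : Fin N → ℝ, (∀ j, 0 ≤ a j) ∧ x = ∑ j, a j • intToReal n (w j) ∧ ∑ j, a j ≤ c := by
  obtain ⟨y, hy, rfl⟩ := hx
  have key : newtonPolyhedron n N w ⊆ {y | ∃ a : Fin N → ℝ, (∀ j, 0 ≤ a j) ∧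
      y = ∑ j, a j • intToReal n (w j) ∧ ∑ j, a j ≤ 1} := by
    refine convexHull_min ?_ ?_
    · rintro z (rfl | ⟨j, rfl⟩)
      · exact ⟨0, by simp⟩
      · refine ⟨Pi.single j 1, fun k => ?_, ?_, ?_⟩
        · by_cases h : k = j
          · subst h; simp
          · simp [h]
        · simp [Pi.single_apply]
        · simp
    · rintro _ ⟨a, ha, rfl, ha1⟩ _ ⟨b, hb, rfl, hb1⟩ p q hp hq hpq
      refine ⟨fun j => p * a j + q * b j, fun j => ?_, ?_, ?_⟩
      · have := ha j
        have := hb j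
        positivity
      · simp [add_smul, mul_smul, Finset.sum_add_distrib, Finset.smul_sum]
      · rw [Finset.sum_add_distrib, ← Finset.mul_sum, ← Finset.mul_sum]
        nlinarith
  obtain ⟨a, ha, rfl, ha1⟩ := key hy
  refine ⟨fun j => c * a j, fun j => mul_nonneg hc (ha j), ?_, ?_⟩
  · simp [mul_smul, Finset.smul_sum]
  · rw [← Finset.mul_sum]
    exact mul_le_of_le_one_right hc ha1

lemma exists_minimal_representation {n N : ℕ} (w : Fin N → Fin n → ℤ) {x : Fin n → ℝ}
    (hx : x ∈ deltaCone n N w) :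
    ∃ a : Fin N → ℝ, (∀ j, 0 ≤ a j) ∧ x = ∑ j, a j • intToReal n (w j) ∧
      weight n N w x = ∑ j, a j := by
  obtain ⟨c, hc, hxc⟩ := hx
  -- Representations no worse than `c` form a compact set, on which the total `∑ j, a j` attains
  -- its minimum.
  let K : Set (Fin N → ℝ) := {a | (∀ j, 0 ≤ a j) ∧ x = ∑ j, a j • intToReal n (w j) ∧
    ∑ j, a j ≤ ∑ j, c j}
  have hKclosed : IsClosed K := by
    have h1 : IsClosed {a : Fin N → ℝ | ∀ j, 0 ≤ a j} := by
      simp only [Set.ofPred_forall]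
      exact isClosed_iInter fun j => isClosed_le continuous_const (continuous_apply j)
    have h2 : IsClosed {a : Fin N → ℝ | x = ∑ j, a j • intToReal n (w j)} :=
      isClosed_eq continuous_const (by fun_prop)
    have h3 : IsClosed {a : Fin N → ℝ | ∑ j, a j ≤ ∑ j, c j} :=
      isClosed_le (by fun_prop) continuous_const
    exact h1.inter (h2.inter h3)
  have hKcompact : IsCompact K := by
    refine (isCompact_Icc (a := (0 : Fin N → ℝ)) (b := fun _ => ∑ j, c j)).of_isClosed_subset
      hKclosed ?_
    rintro a ⟨ha, -, hac⟩
    exact ⟨ha, fun j =>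
      (Finset.single_le_sum (fun k _ => ha k) (Finset.mem_univ j)).trans hac⟩
  obtain ⟨a, ⟨ha, hxa, hac⟩, hmin⟩ := hKcompact.exists_isMinOn ⟨c, hc, hxc, le_rfl⟩
    (f := fun a : Fin N → ℝ => ∑ j, a j) (by fun_prop)
  refine ⟨a, ha, hxa, le_antisymm ?_ ?_⟩
  · rw [hxa]
    exact weight_le_sum w a ha
  · refine le_csInf ⟨∑ j, c j, Finset.sum_nonneg fun j _ => hc j, ?_⟩ ?_
    · rw [hxc]
      exact sum_mem_smul_newtonPolyhedron w c hc
    · rintro d ⟨hd, hxd⟩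
      obtain ⟨b, hb, hxb, hbd⟩ := exists_representation_of_mem_smul w hd hxd
      rcases le_total (∑ j, b j) (∑ j, c j) with h | h
      · exact (hmin (show b ∈ K from ⟨hb, hxb, h⟩)).trans hbd
      · exact hac.trans (h.trans hbd)

lemma weight_sum_le {n N : ℕ} (w : Fin N → Fin n → ℤ) {ι : Type*} [Fintype ι]
    (x : ι → Fin n → ℝ) (hx : ∀ i, x i ∈ deltaCone n N w) (v : ι → ℝ) (hv : ∀ i, 0 ≤ v i) :
    weight n N w (∑ i, v i • x i) ≤ ∑ i, v i * weight n N w (x i) := by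
  choose a ha hxa hwa using fun i => exists_minimal_representation w (hx i)
  have h := weight_le_sum w (fun j => ∑ i, v i * a i j)
    fun j => Finset.sum_nonneg fun i _ => mul_nonneg (hv i) (ha i j)
  have e1 : ∑ j, (∑ i, v i * a i j) • intToReal n (w j) = ∑ i, v i • x i := by
    simp_rw [Finset.sum_smul]
    rw [Finset.sum_comm]
    refine Finset.sum_congr rfl fun i _ => ?_
    conv_rhs => rw [hxa i]
    simp [Finset.smul_sum, mul_smul]
  have e2 : ∑ j, ∑ i, v i * a i j = ∑ i, v i * weight n N w (x i) := by
    rw [Finset.sum_comm]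
    simp_rw [hwa, Finset.mul_sum]
  rwa [e1, e2] at h

/-- A decomposition over any finite index type with coefficients in `ℕ` can be reindexed by some
`Fin r` with positive coefficients, by dropping the terms with coefficient zero. -/
lemma exists_fin_pos_decomposition {n N : ℕ} (w : Fin N → Fin n → ℤ) (u : Fin n → ℤ)
    {ι : Type*} [Fintype ι] (t : ι → Fin n → ℤ) (v : ι → ℕ)
    (ht : ∀ i, t i ∈ latticeS n N w) (hu : u = ∑ i, (v i : ℤ) • t i)
    (hw : weight n N w (intToReal n u) = ∑ i, (v i : ℝ) * weight n N w (intToReal n (t i))) :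
    ∃ (r : ℕ) (t : Fin r → Fin n → ℤ) (v : Fin r → ℕ),
      (∀ i, t i ∈ latticeS n N w) ∧ (∀ i, 0 < v i) ∧
      u = ∑ i, (v i : ℤ) • t i ∧
      weight n N w (intToReal n u) = ∑ i, (v i : ℝ) * weight n N w (intToReal n (t i)) := by
  classical
  let e := Fintype.equivFin {i // v i ≠ 0}
  have drop {M : Type} [AddCommMonoid M] {f : ι → M} (hf : ∀ i, v i = 0 → f i = 0) :
      ∑ i, f i = ∑ i : {i // v i ≠ 0}, f i := by
    rw [← Finset.sum_subtype (Finset.univ.filter (v · ≠ 0)) (by simp) f]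
    exact (Finset.sum_filter_of_ne (p := (v · ≠ 0)) fun i _ hi h => hi (hf i h)).symm
  refine ⟨_, fun k => t (e.symm k), fun k => v (e.symm k), fun k => ht _,
    fun k => Nat.pos_of_ne_zero (e.symm k).2, ?_, ?_⟩
  · rw [hu, e.symm.sum_comp fun i : {i // v i ≠ 0} => (v i : ℤ) • t i]
    exact drop fun i h => by simp [h]
  · rw [hw, e.symm.sum_comp fun i : {i // v i ≠ 0} => (v i : ℝ) * weight n N w (intToReal n (t i))]
    exact drop fun i h => by simp [h]

/-- every nonzero lattice point `u` of the cone `δ` can be written as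
`u = ∑ vᵢ tᵢ` with `tᵢ ∈ S`, `vᵢ` positive integers, and
`w(u) = ∑ vᵢ w(tᵢ)`. -/
theorem weight_decomposition
    (n N : ℕ) (hn : 1 ≤ n) (w : Fin N → Fin n → ℤ)
    (u : Fin n → ℤ) (hu : intToReal n u ∈ deltaCone n N w) (hu0 : u ≠ 0) :
    ∃ (r : ℕ) (t : Fin r → Fin n → ℤ) (v : Fin r → ℕ),
      (∀ i, t i ∈ latticeS n N w) ∧ (∀ i, 0 < v i) ∧
      u = ∑ i, (v i : ℤ) • t i ∧
      weight n N w (intToReal n u) = ∑ i, (v i : ℝ) * weight n N w (intToReal n (t i)) := by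
  obtain ⟨c, hc, huc, hwc⟩ := exists_minimal_representation w hu
  let s : Fin n → ℤ := u - ∑ j, (⌊c j⌋₊ : ℤ) • w j
  have hs : intToReal n s = ∑ j, Int.fract (c j) • intToReal n (w j) := by
    have h1 : intToReal n s = intToReal n u - ∑ j, (⌊c j⌋₊ : ℝ) • intToReal n (w j) := by
      funext k
      simp [s, intToReal]
    rw [h1, huc, ← Finset.sum_sub_distrib]
    refine Finset.sum_congr rfl fun j _ => ?_
    rw [← sub_smul, natCast_floor_eq_intCast_floor (hc j), Int.self_sub_floor]
  have hwj : ∀ j, intToReal n (w j) = ∑ k, (Pi.single j 1 : Fin N → ℝ) k • intToReal n (w k) :=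
    fun j => by simp [Pi.single_apply]
  have hsingle : ∀ j k, 0 ≤ (Pi.single j 1 : Fin N → ℝ) k ∧ (Pi.single j 1 : Fin N → ℝ) k ≤ 1 :=
    fun j k => by rw [Pi.single_apply]; split_ifs <;> norm_num
  -- The index `none` carries the fractional part `s`, the index `some j` the vector `w j`.
  let t : Option (Fin N) → Fin n → ℤ := fun o => o.elim s w
  let v : Option (Fin N) → ℕ := fun o => o.elim 1 fun j => ⌊c j⌋₊
  have ht : ∀ i, t i ∈ latticeS n N w := by
    rintro (_ | j)
    · exact ⟨fun j => Int.fract (c j),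
        fun j => ⟨Int.fract_nonneg _, (Int.fract_lt_one _).le⟩, hs⟩
    · exact ⟨Pi.single j 1, hsingle j, hwj j⟩
  have hut : u = ∑ i, (v i : ℤ) • t i := by
    simp [Fintype.sum_option, t, v, s]
  have hut' : intToReal n u = ∑ i, (v i : ℝ) • intToReal n (t i) := by
    conv_lhs => rw [hut]
    funext k
    simp [intToReal]
  refine exists_fin_pos_decomposition w u t v ht hut (le_antisymm ?_ ?_)
  · conv_lhs => rw [hut']
    refine weight_sum_le w _ (fun i => ?_) _ fun i => Nat.cast_nonneg _
    obtain ⟨r, hr, hri⟩ := ht i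
    exact ⟨r, fun j => (hr j).1, hri⟩
  · have hw1 : ∀ j, weight n N w (intToReal n (w j)) ≤ 1 := fun j => by
      have h := weight_le_sum w (Pi.single j 1) fun k => (hsingle j k).1
      rw [← hwj j] at h
      simpa using h
    have hws : weight n N w (intToReal n s) ≤ ∑ j, Int.fract (c j) := by
      rw [hs]
      exact weight_le_sum w _ fun j => Int.fract_nonneg _
    have hsum : ∑ j, (⌊c j⌋₊ : ℝ) * weight n N w (intToReal n (w j)) ≤ ∑ j, (⌊c j⌋₊ : ℝ) :=
      Finset.sum_le_sum fun j _ => mul_le_of_le_one_right (Nat.cast_nonneg _) (hw1 j)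
    have hsplit : ∑ j, c j = ∑ j, Int.fract (c j) + ∑ j, (⌊c j⌋₊ : ℝ) := by
      rw [← Finset.sum_add_distrib]
      refine Finset.sum_congr rfl fun j _ => ?_
      rw [natCast_floor_eq_intCast_floor (hc j), Int.fract_add_floor]
    rw [hwc, hsplit, Fintype.sum_option]
    simpa [t, v] using add_le_add hws hsum
end

section
/- For every integer l ≥ 0, ord(γ_l) ≥ p^{l+1}/(p−1) − (l+1). -/
/-!
The terms `γ^{p^i}/p^i` have `ord` equal to `c i = p^i/(p-1) - i`, and `c` is nondecreasing because
`c (i+1) - c i = p^i - 1 ≥ 0`. Since the whole series sums to `0`, `γ_l` is minus the tail starting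
at `l + 1`, and by the ultrametric inequality (finite tails lie in a closed ball, hence so does
their limit) that tail has `ord` at least `c (l + 1)`.
-/

open scoped Classical

/-- The additive valuation `ord x = -log_p ‖x‖`, with `ord 0 = +∞`, valued in `EReal`. -/
noncomputable def ord (p : ℕ) {K : Type*} [NormedField K] (x : K) : EReal :=
  if x = 0 then ⊤ else ((-Real.logb p ‖x‖ : ℝ) : EReal)

/-- The partial sum `γ_l = ∑_{i=0}^l γ^{p^i} / p^i`. -/
noncomputable def gammaPartial (p : ℕ) {K : Type*} [NormedField K] (γ : K) (l : ℕ) : K :=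
  ∑ i ∈ Finset.range (l + 1), γ ^ p ^ i / (p : K) ^ i

lemma termExponent_monotone (p : ℕ) (hp : p.Prime) :
    Monotone (fun i : ℕ => (p : ℝ) ^ i / ((p : ℝ) - 1) - i) := by
  have h1 : (1 : ℝ) < p := by exact_mod_cast hp.one_lt
  refine monotone_nat_of_le_succ fun i => ?_
  have h2 : (p : ℝ) ^ (i + 1) / ((p : ℝ) - 1) = (p : ℝ) ^ i / ((p : ℝ) - 1) + (p : ℝ) ^ i := by
    have : (p : ℝ) - 1 ≠ 0 := by linarith
    field_simp
    ring
  have h3 : (1 : ℝ) ≤ (p : ℝ) ^ i := one_le_pow₀ h1.le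
  rw [h2]
  push_cast
  linarith

lemma norm_term_eq (p : ℕ) (hp : p.Prime) {K : Type*} [NormedField K]
    (hpnorm : ‖(p : K)‖ = (p : ℝ)⁻¹)
    (γ : K) (hγ : ord p γ = ((1 / ((p : ℝ) - 1) : ℝ) : EReal)) (i : ℕ) :
    ‖γ ^ p ^ i / (p : K) ^ i‖ = (p : ℝ) ^ (-((p : ℝ) ^ i / ((p : ℝ) - 1) - i)) := by
  have h1 : (1 : ℝ) < p := by exact_mod_cast hp.one_lt
  have h0 : (0 : ℝ) < p := by linarith
  have hγ0 : γ ≠ 0 := by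
    rintro rfl
    simp only [ord, if_true] at hγ
    exact EReal.coe_ne_top _ hγ.symm
  have hlog : -Real.logb p ‖γ‖ = 1 / ((p : ℝ) - 1) := by
    simp only [ord, if_neg hγ0] at hγ
    exact_mod_cast hγ
  have hn : ‖γ‖ = (p : ℝ) ^ (-(1 / ((p : ℝ) - 1))) := by
    rw [← hlog, neg_neg, Real.rpow_logb h0 h1.ne' (norm_pos_iff.2 hγ0)]
  rw [norm_div, norm_pow, norm_pow, hpnorm, hn, inv_pow, div_inv_eq_mul,
    ← Real.rpow_natCast, ← Real.rpow_mul h0.le, ← Real.rpow_natCast (p : ℝ) i,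
    ← Real.rpow_add h0]
  congr 1
  push_cast
  rw [Real.rpow_natCast]
  ring

/-- If the terms of a null series are bounded by `B` from index `m` on, the ultrametric
inequality bounds the partial sum of the first `m` terms by `B`. -/
lemma norm_partialSum_le {K : Type*} [NormedField K]
    (hna : ∀ x y : K, ‖x + y‖ ≤ max ‖x‖ ‖y‖) (f : ℕ → K) (hsum : HasSum f 0)
    (m : ℕ) (B : ℝ) (hB : ∀ i, m ≤ i → ‖f i‖ ≤ B) :
    ‖∑ i ∈ Finset.range m, f i‖ ≤ B := by
  have hB0 : 0 ≤ B := (norm_nonneg _).trans (hB m le_rfl)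
  have htail : ∀ n, m ≤ n →
      ‖∑ i ∈ Finset.range n, f i - ∑ i ∈ Finset.range m, f i‖ ≤ B := by
    intro n hn
    induction n, hn using Nat.le_induction with
    | base => simpa using hB0
    | succ n hn ih =>
      rw [Finset.sum_range_succ, add_sub_right_comm]
      exact (hna _ _).trans (max_le ih (hB n hn))
  have hlim := (hsum.tendsto_sum_nat.sub_const (∑ i ∈ Finset.range m, f i)).norm
  rw [zero_sub, norm_neg] at hlim
  exact le_of_tendsto hlim (Filter.eventually_atTop.2 ⟨m, htail⟩)

/-- `ord(γ_l) ≥ p^{l+1}/(p-1) - (l+1)` for every `l ≥ 0`. -/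
theorem ord_gammaPartial_ge (p : ℕ) (hp : p.Prime)
    {K : Type*} [NormedField K] [CompleteSpace K] [CharZero K]
    (hna : ∀ x y : K, ‖x + y‖ ≤ max ‖x‖ ‖y‖)
    (hpnorm : ‖(p : K)‖ = (p : ℝ)⁻¹)
    (γ : K) (hγ : ord p γ = ((1 / ((p : ℝ) - 1) : ℝ) : EReal))
    (hsum : HasSum (fun i : ℕ => γ ^ p ^ i / (p : K) ^ i) 0)
    (l : ℕ) :
    (((p : ℝ) ^ (l + 1) / ((p : ℝ) - 1) - (l + 1) : ℝ) : EReal) ≤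
      ord p (gammaPartial p γ l) := by
  have h1 : (1 : ℝ) < p := by exact_mod_cast hp.one_lt
  have h0 : (0 : ℝ) < p := by linarith
  have hle : ‖gammaPartial p γ l‖ ≤
      (p : ℝ) ^ (-((p : ℝ) ^ (l + 1) / ((p : ℝ) - 1) - ((l + 1 : ℕ) : ℝ))) := by
    refine norm_partialSum_le hna _ hsum (l + 1) _ fun i hi => ?_
    rw [norm_term_eq p hp hpnorm γ hγ i]
    exact Real.rpow_le_rpow_of_exponent_le h1.le (neg_le_neg (termExponent_monotone p hp hi))
  unfold ord
  split_ifs with hz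
  · exact le_top
  · rw [EReal.coe_le_coe_iff, le_neg, Real.logb_le_iff_le_rpow h1 (norm_pos_iff.2 hz)]
    exact_mod_cast hle
end

section
/- For every integer l ≥ 1 and every integer k ≥ 0, ord(γ_l^k / k!) ≥ ((p−1)/p)·k·p^l. -/
/-!
Since `∑ γ^{p^i}/p^i = 0`, the partial sum `γ_l` is minus the tail `∑_{i > l} γ^{p^i}/p^i`.  The
terms have order `p^i/(p-1) - i`, which increases with `i`, so the ultrametric inequality gives
`ord γ_l ≥ p^{l+1}/(p-1) - (l+1)` (`norm_gammaPartial_le`).  Legendre's formula gives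
`ord k! ≤ k/(p-1)` (`neg_le_logb_norm_factorial`).  The claim then reduces to
`p + ⋯ + p^l - l ≥ p^l - p^{l-1}`, that is to `p + ⋯ + p^{l-1} + p^{l-1} ≥ l`
(`exponent_bound`).
-/

open scoped Classical

/-- A natural number prime to `p` has norm at least one, by a Bézout relation `a m + b p = 1`. -/
lemma one_le_norm_natCast_of_coprime {p m : ℕ} {K : Type*} [NormedField K]
    [IsUltrametricDist K] (hplt : ‖(p : K)‖ < 1) (hm : Nat.Coprime m p) :
    1 ≤ ‖(m : K)‖ := by
  by_contra! h
  obtain ⟨a, b, hab⟩ := Nat.isCoprime_iff_coprime.mpr hm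
  have hK : (a : K) * m + b * p = 1 := by exact_mod_cast congrArg (Int.cast : ℤ → K) hab
  have h1 : ‖(a : K) * m + b * p‖ < 1 := by
    refine (IsUltrametricDist.norm_add_le_max _ _).trans_lt (max_lt ?_ ?_)
    · rw [norm_mul]
      exact (mul_le_of_le_one_left (norm_nonneg _)
        (IsUltrametricDist.norm_intCast_le_one K a)).trans_lt h
    · rw [norm_mul]
      exact (mul_le_of_le_one_left (norm_nonneg _)
        (IsUltrametricDist.norm_intCast_le_one K b)).trans_lt hplt
  rw [hK, norm_one] at h1
  exact lt_irrefl _ h1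

/-- `ord k! ≤ k / (p - 1)`, from Legendre's formula. -/
lemma neg_le_logb_norm_factorial {p : ℕ} (hp : p.Prime) {K : Type*} [NormedField K]
    [IsUltrametricDist K] (hpnorm : ‖(p : K)‖ = (p : ℝ)⁻¹) (k : ℕ) :
    -(k / ((p : ℝ) - 1)) ≤ Real.logb p ‖(k.factorial : K)‖ := by
  have hp1 : (1 : ℝ) < p := by exact_mod_cast hp.one_lt
  have hplt : ‖(p : K)‖ < 1 := by rw [hpnorm]; exact inv_lt_one_of_one_lt₀ hp1
  have := Fact.mk hp
  obtain ⟨v, m, hm, hkm⟩ := Nat.exists_eq_pow_mul_and_not_dvd k.factorial_ne_zero p hp.ne_one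
  have hcop : Nat.Coprime m p := ((hp.coprime_iff_not_dvd).mpr hm).symm
  have hm1 := one_le_norm_natCast_of_coprime (K := K) hplt hcop
  have hleg : (p - 1) * v ≤ k := by
    have := sub_one_mul_padicValNat_factorial (p := p) k
    have hv : v ≤ padicValNat p k.factorial :=
      (padicValNat_dvd_iff_le k.factorial_ne_zero).mp ⟨m, hkm⟩
    calc (p - 1) * v ≤ (p - 1) * padicValNat p k.factorial := by gcongr
      _ ≤ k := this ▸ Nat.sub_le _ _
  have hlegR : ((p : ℝ) - 1) * v ≤ k := by
    have h : (((p - 1) * v : ℕ) : ℝ) ≤ k := by exact_mod_cast hleg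
    rwa [Nat.cast_mul, Nat.cast_sub hp.one_le, Nat.cast_one] at h
  have hvle : (v : ℝ) ≤ k / ((p : ℝ) - 1) := by
    rw [le_div_iff₀ (by linarith)]; linarith
  have hlog : Real.logb p ‖(k.factorial : K)‖ = -v + Real.logb p ‖(m : K)‖ := by
    rw [hkm, Nat.cast_mul, Nat.cast_pow, norm_mul, norm_pow, hpnorm,
      Real.logb_mul (by positivity) (by positivity), Real.logb_pow, Real.logb_inv,
      Real.logb_self_eq_one hp1]
    ring
  have := Real.logb_nonneg hp1 hm1
  linarith

/-- The order `p^i/(p-1) - i` of the `i`-th term `γ^{p^i}/p^i` is nondecreasing in `i`. -/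
lemma monotone_termOrd {p : ℕ} (hp : p.Prime) :
    Monotone fun i : ℕ => (p : ℝ) ^ i / ((p : ℝ) - 1) - i := by
  have hp1 : (1 : ℝ) < p := by exact_mod_cast hp.one_lt
  have hne : (p : ℝ) - 1 ≠ 0 := by linarith
  refine monotone_nat_of_le_succ fun i => ?_
  have h : (p : ℝ) ^ (i + 1) / ((p : ℝ) - 1) = (p : ℝ) ^ i / ((p : ℝ) - 1) + (p : ℝ) ^ i := by
    field_simp; ring
  have := one_le_pow₀ hp1.le (n := i)
  push_cast
  linarith

/-- `ord γ_l ≥ p^{l+1}/(p-1) - (l+1)`: the partial sum is minus the tail of a series with sum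
zero, and the tail is bounded by its first term. -/
lemma norm_gammaPartial_le {p : ℕ} (hp : p.Prime) {K : Type*} [NormedField K]
    [IsUltrametricDist K] (hpnorm : ‖(p : K)‖ = (p : ℝ)⁻¹) {γ : K}
    (hγ : ‖γ‖ = (p : ℝ) ^ (-(1 / ((p : ℝ) - 1))))
    (hsum : HasSum (fun i : ℕ => γ ^ p ^ i / (p : K) ^ i) 0) (l : ℕ) :
    ‖gammaPartial p γ l‖ ≤
      (p : ℝ) ^ (-((p : ℝ) ^ (l + 1) / ((p : ℝ) - 1) - ((l + 1 : ℕ) : ℝ))) := by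
  have hp1 : (1 : ℝ) < p := by exact_mod_cast hp.one_lt
  have hp0 : (0 : ℝ) < p := by linarith
  have hterm (i : ℕ) : ‖γ ^ p ^ i / (p : K) ^ i‖ =
      (p : ℝ) ^ (-((p : ℝ) ^ i / ((p : ℝ) - 1) - i)) := by
    rw [norm_div, norm_pow, norm_pow, hpnorm, hγ, ← Real.rpow_mul_natCast hp0.le, inv_pow,
      div_inv_eq_mul, ← Real.rpow_natCast (p : ℝ) i, ← Real.rpow_add hp0]
    congr 1
    push_cast
    rw [Real.rpow_natCast]
    ring
  have htail := (hasSum_nat_add_iff' (l + 1)).mpr hsum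
  have hg : gammaPartial p γ l =
      -∑' i, γ ^ p ^ (i + (l + 1)) / (p : K) ^ (i + (l + 1)) := by
    rw [htail.tsum_eq, gammaPartial]; ring
  rw [hg, norm_neg]
  refine IsUltrametricDist.norm_tsum_le_of_forall_le_of_nonneg (by positivity) fun i => ?_
  rw [hterm]
  exact Real.rpow_le_rpow_of_exponent_le hp1.le
    (neg_le_neg (monotone_termOrd hp (Nat.le_add_left (l + 1) i)))

/-- The numerical inequality left after combining the bounds for `γ_l` and `k!`, with `l = n + 1`;
by induction on `n`. -/
lemma exponent_bound {p : ℕ} (hp : p.Prime) (n : ℕ) :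
    ((p : ℝ) - 1) * (p : ℝ) ^ n ≤
      (p : ℝ) ^ (n + 2) / ((p : ℝ) - 1) - ((n : ℝ) + 2) - 1 / ((p : ℝ) - 1) := by
  have hp2 : (2 : ℝ) ≤ p := by exact_mod_cast hp.two_le
  have hne : (p : ℝ) - 1 ≠ 0 := by linarith
  induction n with
  | zero =>
    apply le_of_eq
    field_simp
    push_cast
    ring
  | succ n ih =>
    have h : (p : ℝ) ^ (n + 1 + 2) / ((p : ℝ) - 1) =
        (p : ℝ) ^ (n + 2) / ((p : ℝ) - 1) + (p : ℝ) ^ (n + 2) := by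
      field_simp; ring
    have h1 := one_le_pow₀ (by linarith : (1 : ℝ) ≤ p) (n := n)
    have h2 : (p : ℝ) ^ (n + 2) = p ^ 2 * p ^ n := by ring
    have h3 : (p : ℝ) ^ (n + 1) = p * p ^ n := by ring
    rw [h, h2, h3]
    rw [h2] at ih
    push_cast
    nlinarith

/-- for `l ≥ 1` and `k ≥ 0`, `ord(γ_l^k / k!) ≥ ((p-1)/p)·k·p^l`. -/
theorem ord_gammaPartial_pow_div_factorial_ge (p : ℕ) (hp : p.Prime)
    {K : Type*} [NormedField K] [CompleteSpace K] [CharZero K]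
    (hna : ∀ x y : K, ‖x + y‖ ≤ max ‖x‖ ‖y‖)
    (hpnorm : ‖(p : K)‖ = (p : ℝ)⁻¹)
    (γ : K) (hγ : ord p γ = ((1 / ((p : ℝ) - 1) : ℝ) : EReal))
    (hsum : HasSum (fun i : ℕ => γ ^ p ^ i / (p : K) ^ i) 0)
    (l : ℕ) (hl : 1 ≤ l) (k : ℕ) :
    ((((p : ℝ) - 1) / (p : ℝ) * k * (p : ℝ) ^ l : ℝ) : EReal) ≤
      ord p (gammaPartial p γ l ^ k / (Nat.factorial k : K)) := by
  have hp1 : (1 : ℝ) < p := by exact_mod_cast hp.one_lt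
  have hp0 : (0 : ℝ) < p := by linarith
  have : IsUltrametricDist K :=
    IsUltrametricDist.isUltrametricDist_of_forall_norm_add_le_max_norm hna
  have hγ0 : γ ≠ 0 := by
    rintro rfl
    simp only [ord, if_true] at hγ
    exact EReal.coe_ne_top _ hγ.symm
  have hγn : ‖γ‖ = (p : ℝ) ^ (-(1 / ((p : ℝ) - 1))) := by
    rw [ord, if_neg hγ0, EReal.coe_eq_coe_iff] at hγ
    rw [← hγ, neg_neg, Real.rpow_logb hp0 hp1.ne' (norm_pos_iff.mpr hγ0)]
  by_cases hx : gammaPartial p γ l ^ k / (Nat.factorial k : K) = 0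
  · rw [ord, if_pos hx]; exact le_top
  rw [ord, if_neg hx, EReal.coe_le_coe_iff]
  rcases Nat.eq_zero_or_pos k with rfl | hk
  · simp
  obtain ⟨hgk, hk0⟩ := div_ne_zero_iff.mp hx
  have hg : gammaPartial p γ l ≠ 0 := fun h => hgk (by rw [h, zero_pow hk.ne'])
  have hA := (Real.logb_le_iff_le_rpow hp1 (norm_pos_iff.mpr hg)).mpr
    (norm_gammaPartial_le hp hpnorm hγn hsum l)
  have hB := neg_le_logb_norm_factorial (K := K) hp hpnorm k
  rw [norm_div, Real.logb_div (norm_ne_zero_iff.mpr hgk) (norm_ne_zero_iff.mpr hk0), norm_pow,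
    Real.logb_pow]
  obtain ⟨n, rfl⟩ : ∃ n, l = n + 1 := ⟨l - 1, by omega⟩
  have hC := exponent_bound hp n
  have hlhs : ((p : ℝ) - 1) / p * k * (p : ℝ) ^ (n + 1) = k * (((p : ℝ) - 1) * (p : ℝ) ^ n) := by
    field_simp
    ring
  have hdiv : (k : ℝ) / ((p : ℝ) - 1) = k * (1 / ((p : ℝ) - 1)) := by ring
  rw [hlhs]
  rw [hdiv] at hB
  push_cast at hA
  have hkA := mul_le_mul_of_nonneg_left hA (Nat.cast_nonneg (α := ℝ) k)
  have hkC := mul_le_mul_of_nonneg_left hC (Nat.cast_nonneg (α := ℝ) k)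
  have e : (n : ℝ) + 1 + 1 = n + 2 := by ring
  rw [e] at hkA
  linarith
end

section
/- Let c ∈ K with ord(c) ≥ 2/(p−1) and let a_1, …, a_N ∈ K with ord(a_j) ≥ 0. Then for every u ∈ δ ∩ ℤ^n, the family of terms c^{k_1+⋯+k_N}·(Π_{j=1}^N a_j^{k_j})/(Π_{j=1}^N k_j!), indexed by the tuples k = (k_1,…,k_N) ∈ ℤ_{≥0}^N with Σ_j k_j w_j = u, is summable in K, and its sum B_u satisfies ord(B_u) ≥ w(u)/(p−1). (This expresses that exp(c·f̂(x)) = Π_{j=1}^N exp(c·a_j x^{w_j}), where f̂(x) = Σ_j a_j x^{w_j}, lies in the space L(1/(p−1), 0) of series Σ_u B_u x^u with ord(B_u) ≥ w(u)/(p−1).) -/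
/-!
Put `r = p^(-1/(p-1)) < 1`. Legendre's formula `(p-1) · v_p(m!) ≤ m` gives `‖m!‖ ≥ r^m`
(`le_norm_factorial`), while the hypotheses say `‖c‖ ≤ r²` and `‖a_j‖ ≤ 1`. Hence the term
indexed by `k` has norm at most `r^{2|k|} / r^{|k|} = r^{|k|}`, where `|k| = ∑ k_j`
(`norm_term_le`).

Only finitely many `k` have `|k|` below a given bound, so the terms tend to `0` along the
cofinite filter, which suffices for summability in a complete nonarchimedean field. If
`∑ k_j w_j = u`, then `u ∈ |k| • Δ`, so `w(u) ≤ |k|` (`weight_le`); every term therefore has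
norm at most `r^{w(u)}`, and by the ultrametric inequality so does the sum.
-/

open Pointwise

open scoped Classical

/-- Lower bounds on `ord` are upper bounds on the norm; this covers `x = 0`, where both hold. -/
lemma le_ord_iff {p : ℕ} (hp : 1 < p) {K : Type*} [NormedField K] (x : K) (t : ℝ) :
    (t : EReal) ≤ ord p x ↔ ‖x‖ ≤ (p : ℝ) ^ (-t) := by
  have hp' : (1 : ℝ) < p := by exact_mod_cast hp
  unfold ord
  split_ifs with h
  · simp only [h, norm_zero, le_top, true_iff]
    positivity
  · rw [EReal.coe_le_coe_iff, ← Real.logb_le_iff_le_rpow hp' (norm_pos_iff.2 h)]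
    constructor <;> intro h <;> linarith

/-- The real number `p^(-1/(p-1))`, the radius of convergence of the `p`-adic exponential. -/
noncomputable def expRadius (p : ℕ) : ℝ := (p : ℝ) ^ (-(1 / ((p : ℝ) - 1)))

lemma expRadius_pos {p : ℕ} (hp : 1 < p) : 0 < expRadius p :=
  Real.rpow_pos_of_pos (by exact_mod_cast (by omega : 0 < p)) _

lemma expRadius_lt_one {p : ℕ} (hp : 1 < p) : expRadius p < 1 := by
  have hp' : (1 : ℝ) < p := by exact_mod_cast hp
  apply Real.rpow_lt_one_of_one_lt_of_neg hp'
  have : 0 < 1 / ((p : ℝ) - 1) := one_div_pos.2 (by linarith)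
  linarith

lemma rpow_neg_div {p : ℕ} (t : ℝ) :
    (p : ℝ) ^ (-(t / ((p : ℝ) - 1))) = expRadius p ^ t := by
  unfold expRadius
  rw [← Real.rpow_mul (Nat.cast_nonneg p)]
  congr 1
  ring

/-- Integers prime to `p` are units: from a Bézout relation `m x + p y = 1`, the ultrametric
inequality forces `‖m‖ ≥ 1`. -/
lemma one_le_norm_natCast {p : ℕ} (hp : p.Prime) {K : Type*} [NormedField K]
    [IsUltrametricDist K] (hpnorm : ‖(p : K)‖ = (p : ℝ)⁻¹) {m : ℕ} (hm : ¬ p ∣ m) :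
    1 ≤ ‖(m : K)‖ := by
  have hp' : (1 : ℝ) < p := by exact_mod_cast hp.one_lt
  have hplt : ‖(p : K)‖ < 1 := hpnorm ▸ inv_lt_one_of_one_lt₀ hp'
  have hcop : IsCoprime (m : ℤ) (p : ℤ) :=
    Nat.isCoprime_iff_coprime.2 ((hp.coprime_iff_not_dvd.2 hm).symm)
  obtain ⟨x, y, hxy⟩ := hcop
  have h1 : (x : K) * m + (y : K) * p = 1 := by exact_mod_cast congrArg (Int.cast : ℤ → K) hxy
  have hx : ‖(x : K)‖ ≤ 1 := IsUltrametricDist.norm_intCast_le_one K x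
  have hy : ‖(y : K)‖ ≤ 1 := IsUltrametricDist.norm_intCast_le_one K y
  have h2 := IsUltrametricDist.norm_add_le_max ((x : K) * m) ((y : K) * p)
  rw [h1, norm_one, norm_mul, norm_mul] at h2
  rcases le_max_iff.1 h2 with h | h
  · exact h.trans (mul_le_of_le_one_left (norm_nonneg _) hx)
  · exact absurd (h.trans (mul_le_of_le_one_left (norm_nonneg _) hy)) (not_le.2 hplt)

lemma le_norm_factorial {p : ℕ} (hp : p.Prime) {K : Type*} [NormedField K]
    [IsUltrametricDist K] (hpnorm : ‖(p : K)‖ = (p : ℝ)⁻¹) (m : ℕ) :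
    expRadius p ^ m ≤ ‖((m.factorial : ℕ) : K)‖ := by
  have : Fact p.Prime := ⟨hp⟩
  have hp' : (1 : ℝ) < p := by exact_mod_cast hp.one_lt
  obtain ⟨v, m', hm', hv⟩ :=
    Nat.exists_eq_pow_mul_and_not_dvd (Nat.factorial_ne_zero m) p hp.ne_one
  have hval : padicValNat p m.factorial = v := by
    rw [hv, padicValNat.mul (pow_ne_zero _ hp.ne_zero) (by rintro rfl; simp at hm'),
      padicValNat.prime_pow, padicValNat.eq_zero_of_not_dvd hm', add_zero]
  have hleg : (p - 1) * v ≤ m := by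
    rw [← hval, sub_one_mul_padicValNat_factorial]
    exact Nat.sub_le _ _
  have hleg' : ((p : ℝ) - 1) * v ≤ m := by
    have : (((p - 1) * v : ℕ) : ℝ) ≤ m := by exact_mod_cast hleg
    rwa [Nat.cast_mul, Nat.cast_sub hp.one_lt.le, Nat.cast_one] at this
  calc expRadius p ^ m = (p : ℝ) ^ (-((m : ℝ) / ((p : ℝ) - 1))) := by
        rw [rpow_neg_div, Real.rpow_natCast]
    _ ≤ (p : ℝ) ^ (-(v : ℝ)) := by
        apply Real.rpow_le_rpow_of_exponent_le hp'.le
        rw [neg_le_neg_iff, le_div_iff₀ (by linarith)]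
        linarith
    _ = ‖(p : K)‖ ^ v := by
        rw [hpnorm, Real.rpow_neg (by linarith), Real.rpow_natCast, inv_pow]
    _ ≤ ‖(p : K)‖ ^ v * ‖(m' : K)‖ :=
        le_mul_of_one_le_right (by positivity) (one_le_norm_natCast hp hpnorm hm')
    _ = ‖((m.factorial : ℕ) : K)‖ := by
        rw [hv]; push_cast; rw [norm_mul, norm_pow]

lemma norm_term_le {p : ℕ} (hp : p.Prime) {K : Type*} [NormedField K]
    [IsUltrametricDist K] (hpnorm : ‖(p : K)‖ = (p : ℝ)⁻¹) {N : ℕ} {c : K} {a : Fin N → K}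
    (hc : ‖c‖ ≤ expRadius p ^ 2) (ha : ∀ j, ‖a j‖ ≤ 1) (k : Fin N → ℕ) :
    ‖c ^ (∑ j, k j) * (∏ j, a j ^ k j) / ((∏ j, Nat.factorial (k j) : ℕ) : K)‖ ≤
      expRadius p ^ (∑ j, k j) := by
  have hr := expRadius_pos hp.one_lt
  have hden : expRadius p ^ (∑ j, k j) ≤ ‖((∏ j, Nat.factorial (k j) : ℕ) : K)‖ := by
    rw [Nat.cast_prod, norm_prod, ← Finset.prod_pow_eq_pow_sum]
    exact Finset.prod_le_prod (fun j _ => by positivity)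
      fun j _ => le_norm_factorial hp hpnorm (k j)
  have hnum : ‖∏ j, a j ^ k j‖ ≤ 1 := by
    rw [norm_prod]
    refine Finset.prod_le_one (fun j _ => norm_nonneg _) fun j _ => ?_
    rw [norm_pow]
    exact pow_le_one₀ (norm_nonneg _) (ha j)
  rw [norm_div, norm_mul, norm_pow, div_le_iff₀ (lt_of_lt_of_le (by positivity) hden)]
  calc ‖c‖ ^ (∑ j, k j) * ‖∏ j, a j ^ k j‖ ≤ (expRadius p ^ 2) ^ (∑ j, k j) * 1 := by
        gcongr
    _ = expRadius p ^ (∑ j, k j) * expRadius p ^ (∑ j, k j) := by ring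
    _ ≤ _ := by gcongr

lemma weight_le {n N : ℕ} {w : Fin N → Fin n → ℤ} {u : Fin n → ℤ} {k : Fin N → ℕ}
    (hk : ∑ j, (k j : ℤ) • w j = u) :
    weight n N w (intToReal n u) ≤ ((∑ j, k j : ℕ) : ℝ) := by
  refine csInf_le ⟨0, fun _ hx => hx.1⟩ ⟨Nat.cast_nonneg _, ?_⟩
  have hu : intToReal n u = ∑ j, (k j : ℝ) • intToReal n (w j) := by
    ext i
    simp [intToReal, ← hk, Finset.sum_apply]
  rcases Nat.eq_zero_or_pos (∑ j, k j) with h0 | hpos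
  · have hk0 : ∀ j, k j = 0 := fun j => (Finset.sum_eq_zero_iff.1 h0) j (Finset.mem_univ j)
    refine ⟨0, subset_convexHull ℝ _ (Set.mem_insert _ _), ?_⟩
    simp [hu, hk0]
  -- For `|k| > 0`, the point `u / |k|` is the center of mass of the `w j` with weights `k j`.
  · have hpos' : (0 : ℝ) < ((∑ j, k j : ℕ) : ℝ) := by exact_mod_cast hpos
    refine ⟨Finset.univ.centerMass (fun j => (k j : ℝ)) fun j => intToReal n (w j),
      Finset.centerMass_mem_convexHull _ (fun j _ => Nat.cast_nonneg _) ?_ fun j _ =>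
        Set.mem_insert_of_mem _ ⟨j, rfl⟩, ?_⟩
    · exact_mod_cast hpos
    · simp only [Finset.centerMass, hu]
      rw [← Nat.cast_sum, smul_inv_smul₀ hpos'.ne']

lemma tendsto_sum_cofinite (N : ℕ) :
    Filter.Tendsto (fun k : Fin N → ℕ => ∑ j, k j) Filter.cofinite Filter.atTop := by
  refine Filter.tendsto_atTop.2 fun M => ?_
  rw [Filter.eventually_cofinite]
  refine (Set.finite_Iic (fun _ : Fin N => M)).subset fun k hk j => ?_
  have h1 : k j ≤ ∑ j, k j := Finset.single_le_sum (fun _ _ => Nat.zero_le _) (Finset.mem_univ j)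
  simp only [Set.mem_ofPred_eq, not_le] at hk
  exact h1.trans hk.le

/-- if `ord(c) ≥ 2/(p-1)` and `ord(a_j) ≥ 0`, then
`exp(c·f̂(x)) = ∏_j exp(c·a_j x^{w_j})` lies in `L(1/(p-1), 0)`: for every
`u ∈ δ ∩ ℤ^n`, the family of terms `c^{∑ k_j}·(∏ a_j^{k_j})/(∏ k_j !)`, indexed
by tuples `k ∈ ℤ_{≥0}^N` with `∑ k_j w_j = u`, is summable in `K`, with sum `B_u`
satisfying `ord(B_u) ≥ w(u)/(p-1)`. -/
theorem exp_mem_L (p : ℕ) (hp : p.Prime)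
    {K : Type*} [NormedField K] [CompleteSpace K] [CharZero K]
    (hna : ∀ x y : K, ‖x + y‖ ≤ max ‖x‖ ‖y‖)
    (hpnorm : ‖(p : K)‖ = (p : ℝ)⁻¹)
    (n N : ℕ) (hn : 1 ≤ n) (w : Fin N → Fin n → ℤ) (hw : ∀ j, w j ≠ 0)
    (c : K) (hc : ((2 / ((p : ℝ) - 1) : ℝ) : EReal) ≤ ord p c)
    (a : Fin N → K) (ha : ∀ j, (0 : EReal) ≤ ord p (a j))
    (u : Fin n → ℤ) (hu : intToReal n u ∈ deltaCone n N w) :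
    ∃ B : K,
      HasSum (fun k : {k : Fin N → ℕ // ∑ j, (k j : ℤ) • w j = u} =>
        c ^ (∑ j, k.1 j) * (∏ j, a j ^ k.1 j) /
          ((∏ j, Nat.factorial (k.1 j) : ℕ) : K)) B ∧
      ((weight n N w (intToReal n u) / ((p : ℝ) - 1) : ℝ) : EReal) ≤ ord p B := by
  have : IsUltrametricDist K :=
    IsUltrametricDist.isUltrametricDist_of_forall_norm_add_le_max_norm hna
  have hr := expRadius_pos hp.one_lt
  have hr1 := expRadius_lt_one hp.one_lt
  rw [le_ord_iff hp.one_lt, rpow_neg_div] at hc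
  have hc' : ‖c‖ ≤ expRadius p ^ 2 := by exact_mod_cast hc
  have ha' : ∀ j, ‖a j‖ ≤ 1 := fun j => by
    simpa using (le_ord_iff hp.one_lt (a j) 0).1 (by simpa using ha j)
  have hterm := norm_term_le hp hpnorm hc' ha'
  refine ⟨_, Summable.hasSum ?_, ?_⟩
  · apply NonarchimedeanAddGroup.summable_of_tendsto_cofinite_zero
    refine squeeze_zero_norm (fun k => hterm k.1) ?_
    exact (tendsto_pow_atTop_nhds_zero_of_lt_one hr.le hr1).comp
      ((tendsto_sum_cofinite N).comp Subtype.val_injective.tendsto_cofinite)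
  · rw [le_ord_iff hp.one_lt, rpow_neg_div]
    refine IsUltrametricDist.norm_tsum_le_of_forall_le_of_nonneg (by positivity) fun k => ?_
    refine (hterm k.1).trans ?_
    rw [← Real.rpow_natCast]
    exact Real.rpow_le_rpow_of_exponent_ge hr hr1.le (weight_le k.2)
end
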